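/- Let u, v ∈ F₂ with ‖u‖ ≥ ‖v‖, let ψ be a chain of type (C1), and put k = ‖u‖+1. Suppose that for every chain ψ' of type (C1) with |ψ'| ≤ |ψ| one has: ‖σ^{k+1}ψ'(u)‖ = ‖σ^{k}ψ'(u)‖ if and only if ‖σ^{k+1}ψ'(v)‖ = ‖σ^{k}ψ'(v)‖, and ‖τ^{k+1}ψ'(u)‖ = ‖τ^{k}ψ'(u)‖ if and only if ‖τ^{k+1}ψ'(v)‖ = ‖τ^{k}ψ'(v)‖. If ψ contains at least ‖u‖+1 factors of σ, then ‖σψ(u)‖ = ‖ψ(u)‖ if and only if ‖σψ(v)‖ = ‖ψ(v)‖. -/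

import Mathlib

noncomputable section

/-- The free group of rank two. -/
abbrev F : Type := FreeGroup (Fin 2)

/-- The generator `a`. -/
def ga : F := FreeGroup.of 0

/-- The generator `b`. -/
def gb : F := FreeGroup.of 1

/-- Build an automorphism of `F` from images of the generators together with
an explicit inverse. -/
def mkAut (x y xi yi : F)
    (h1 : FreeGroup.lift ![xi, yi] x = ga)
    (h2 : FreeGroup.lift ![xi, yi] y = gb)
    (h3 : FreeGroup.lift ![x, y] xi = ga)
    (h4 : FreeGroup.lift ![x, y] yi = gb) : MulAut F :=
  MonoidHom.toMulEquiv (FreeGroup.lift ![x, y]) (FreeGroup.lift ![xi, yi])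
    (by
      ext i
      fin_cases i
      · simpa [ga] using h1
      · simpa [gb] using h2)
    (by
      ext i
      fin_cases i
      · simpa [ga] using h3
      · simpa [gb] using h4)

/-- `σ : a ↦ ab, b ↦ b`. -/
def σ : MulAut F :=
  mkAut (ga * gb) gb (ga * gb⁻¹) gb
    (by simp [ga, gb]) (by simp [ga, gb]) (by simp [ga, gb]) (by simp [ga, gb])

/-- `τ : a ↦ a, b ↦ ba`. -/
def τ : MulAut F :=
  mkAut ga (gb * ga) ga (gb * ga⁻¹)
    (by simp [ga, gb]) (by simp [ga, gb]) (by simp [ga, gb]) (by simp [ga, gb])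

/-- `δ₁ : a ↦ b⁻¹ab, b ↦ b`. -/
def δ₁ : MulAut F :=
  mkAut (gb⁻¹ * ga * gb) gb (gb * ga * gb⁻¹) gb
    (by simp [ga, gb, mul_assoc]) (by simp [ga, gb]) (by simp [ga, gb, mul_assoc]) (by simp [ga, gb])

/-- `δ₂ : a ↦ bab⁻¹, b ↦ b`. -/
def δ₂ : MulAut F :=
  mkAut (gb * ga * gb⁻¹) gb (gb⁻¹ * ga * gb) gb
    (by simp [ga, gb, mul_assoc]) (by simp [ga, gb]) (by simp [ga, gb, mul_assoc]) (by simp [ga, gb])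

/-- `δ₃ : a ↦ a, b ↦ a⁻¹ba`. -/
def δ₃ : MulAut F :=
  mkAut ga (ga⁻¹ * gb * ga) ga (ga * gb * ga⁻¹)
    (by simp [ga, gb]) (by simp [ga, gb, mul_assoc]) (by simp [ga, gb]) (by simp [ga, gb, mul_assoc])

/-- `δ₄ : a ↦ a, b ↦ aba⁻¹`. -/
def δ₄ : MulAut F :=
  mkAut ga (ga * gb * ga⁻¹) ga (ga⁻¹ * gb * ga)
    (by simp [ga, gb]) (by simp [ga, gb, mul_assoc]) (by simp [ga, gb]) (by simp [ga, gb, mul_assoc])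

/-- `π : a ↦ b, b ↦ a⁻¹`. -/
def pi' : MulAut F :=
  mkAut gb ga⁻¹ gb⁻¹ ga
    (by simp [ga, gb]) (by simp [ga, gb]) (by simp [ga, gb]) (by simp [ga, gb])

/-- Word length of (the reduced word representing) an element of `F`. -/
def len (w : F) : ℕ := w.toWord.length

/-- Cyclic length: minimal word length among all conjugates. -/
def cyclen (w : F) : ℕ := sInf {n | ∃ g : F, len (g * w * g⁻¹) = n}

/-- The chain `τ^{m_k}σ^{l_k}⋯τ^{m_1}σ^{l_1}` of type (C1) determined by the list
`[(l_k, m_k), …, (l_1, m_1)]` of pairs of exponents. -/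
def chainC1 (c : List (ℕ × ℕ)) : MulAut F :=
  (c.map fun p => τ ^ p.2 * σ ^ p.1).prod

/-- The chain `τ^{-m_k}σ^{-l_k}⋯τ^{-m_1}σ^{-l_1}` of type (C2) determined by the list
`[(l_k, m_k), …, (l_1, m_1)]` of pairs of exponents. -/
def chainC2 (c : List (ℕ × ℕ)) : MulAut F :=
  (c.map fun p => (τ ^ p.2)⁻¹ * (σ ^ p.1)⁻¹).prod

/-- Number of factors of `σ` in a chain. -/
def sigmaCount (c : List (ℕ × ℕ)) : ℕ := (c.map Prod.fst).sum

/-- Number of factors of `τ` in a chain. -/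
def tauCount (c : List (ℕ × ℕ)) : ℕ := (c.map Prod.snd).sum

/-- The length `Σ (l_i + m_i)` of a chain. -/
def chainLen (c : List (ℕ × ℕ)) : ℕ := sigmaCount c + tauCount c

/-- A Whitehead automorphism of type (W1): it permutes `{a, a⁻¹, b, b⁻¹}`. -/
def IsW1 (β : MulAut F) : Prop :=
  β ga ∈ ({ga, ga⁻¹, gb, gb⁻¹} : Set F) ∧ β gb ∈ ({ga, ga⁻¹, gb, gb⁻¹} : Set F)

/-- A chain of type (C1). -/
def IsC1 (φ : MulAut F) : Prop := ∃ c : List (ℕ × ℕ), c ≠ [] ∧ φ = chainC1 c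

/-- A chain of type (C2). -/
def IsC2 (φ : MulAut F) : Prop := ∃ c : List (ℕ × ℕ), c ≠ [] ∧ φ = chainC2 c

/-- A positive element: a product of the generators `a` and `b`. -/
def IsPositive (w : F) : Prop := w ∈ Submonoid.closure ({ga, gb} : Set F)

/-- The four automorphisms `δ₁, δ₂, δ₃, δ₄`. -/
def δIdx : Fin 4 → MulAut F := ![δ₁, δ₂, δ₃, δ₄]

/-!
Up to conjugation a word is `∏ a^{eᵢ} b^{eᵢ mᵢ}` with signs `eᵢ = ±1` and indices taken cyclically.
Call the sum of `max (0, -mᵢ)` over the `i` with `eᵢ = eᵢ₊₁` its deficit; it is at most `‖w‖`. The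
automorphism `σ` replaces `mᵢ` by `mᵢ + 1` for exactly these `i`. So every factor `σ` lowers a
positive deficit, and once the deficit is zero, `‖σⁿ w‖ = ‖w‖ + n C` for all `n`. The automorphism
`τ` does not raise the deficit: a letter `b^{-e}` contributing to the deficit of `τ w` comes from a
letter of `w` that stands between two letters `a^e` and so contributes there. Hence after `‖w‖`
factors `σ` the length grows linearly, and it is decided by any single step whether it grows at all.
-/

section CyclicWords

open FreeGroup (mk of IsCyclicallyReduced mul_mk pow_mk)

variable {α : Type*}

theorem isCyclicallyReduced_cons_iff {x : α × Bool} {L : List (α × Bool)} :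
    IsCyclicallyReduced (x :: L) ↔ FreeGroup.IsReduced (x :: L ++ [x]) := by
  unfold IsCyclicallyReduced FreeGroup.IsReduced
  rw [List.isChain_append]
  simp

theorem isCyclicallyReduced_append_comm {A B : List (α × Bool)}
    (h : IsCyclicallyReduced (A ++ B)) : IsCyclicallyReduced (B ++ A) := by
  have hpow : FreeGroup.IsReduced (A ++ (B ++ A ++ (B ++ A)) ++ B) := by
    simpa [List.replicate_succ] using (h.flatten_replicate 3).isReduced
  have hBABA := hpow.infix (List.infix_append A (B ++ A ++ (B ++ A)) B)
  exact ⟨(List.isChain_append.1 hBABA).1, (List.isChain_append.1 hBABA).2.2⟩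

theorem isConj_mk_append_comm (A B : List (α × Bool)) : IsConj (mk (A ++ B)) (mk (B ++ A)) :=
  isConj_iff.2 ⟨(mk A)⁻¹, by rw [← mul_mk, ← mul_mk]; group⟩

theorem map_mk_eq_self_of_forall {Φ : Type*} [FunLike Φ (FreeGroup α) (FreeGroup α)]
    [MonoidHomClass Φ (FreeGroup α) (FreeGroup α)] (φ : Φ) {L : List (α × Bool)}
    (hL : ∀ x ∈ L, φ (of x.1) = of x.1) : φ (mk L) = mk L := by
  induction L with
  | nil => exact map_one φ
  | cons x L ih =>
    have hx : φ (mk [x]) = mk [x] := by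
      obtain ⟨i, _ | _⟩ := x
      · change φ (of i)⁻¹ = (of i)⁻¹
        rw [map_inv, hL _ List.mem_cons_self]
      · exact hL (i, true) List.mem_cons_self
    rw [← List.singleton_append, ← mul_mk, map_mul, hx, ih fun y hy => hL y (.tail _ hy)]

theorem exists_isCyclicallyReduced_isConj_mk (w : FreeGroup α) :
    ∃ L, IsCyclicallyReduced L ∧ IsConj w (mk L) := by
  classical
  refine ⟨FreeGroup.reduceCyclically w.toWord,
    FreeGroup.reduceCyclically.isCyclicallyReduced FreeGroup.isReduced_toWord,
    .symm <| isConj_iff.2 ⟨mk (FreeGroup.reduceCyclically.conjugator w.toWord), ?_⟩⟩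
  rw [FreeGroup.inv_mk, mul_mk, mul_mk,
    FreeGroup.reduceCyclically.conj_conjugator_reduceCyclically, FreeGroup.mk_toWord]

variable [DecidableEq α]

theorem freeGroup_norm_pow_le (x : FreeGroup α) (n : ℕ) : (x ^ n).norm ≤ n * x.norm := by
  induction n with
  | zero => simp
  | succ n ih =>
    calc (x ^ (n + 1)).norm ≤ (x ^ n).norm + x.norm := pow_succ x n ▸ FreeGroup.norm_mul_le _ _
      _ ≤ (n + 1) * x.norm := by linarith

theorem norm_mk_of_isReduced {L : List (α × Bool)} (hL : FreeGroup.IsReduced L) :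
    (mk L).norm = L.length := by
  rw [FreeGroup.norm, FreeGroup.toWord_mk, hL.reduce_eq]

theorem length_le_norm_of_isConj {L : List (α × Bool)} (hL : IsCyclicallyReduced L)
    {w : FreeGroup α} (hw : IsConj w (mk L)) : L.length ≤ w.norm := by
  obtain ⟨g, hg⟩ := isConj_iff.1 hw
  -- All powers of `L` are reduced, so the error `2 * g.norm` does not matter for large `n`.
  have hpow (n : ℕ) : n * L.length ≤ n * w.norm + 2 * g.norm :=
    calc n * L.length = (g * w ^ n * g⁻¹).norm := by
          rw [← conj_pow, hg, pow_mk, norm_mk_of_isReduced (hL.flatten_replicate n).isReduced]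
          simp
      _ ≤ g.norm + (w ^ n).norm + g⁻¹.norm :=
          (FreeGroup.norm_mul_le _ _).trans (Nat.add_le_add_right (FreeGroup.norm_mul_le _ _) _)
      _ ≤ n * w.norm + 2 * g.norm := by
          have := freeGroup_norm_pow_le w n
          rw [FreeGroup.norm_inv_eq]
          omega
  by_contra! hlt
  nlinarith [hpow (2 * g.norm + 1)]

theorem cyclen_eq_of_isConj {x y : F} (h : IsConj x y) : cyclen x = cyclen y := by
  obtain ⟨c, rfl⟩ := isConj_iff.1 h
  refine congrArg sInf (Set.ext fun n => ⟨?_, ?_⟩)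
  · rintro ⟨g, rfl⟩
    exact ⟨g * c⁻¹, by congr 1; group⟩
  · rintro ⟨g, rfl⟩
    exact ⟨g * c, by congr 1; group⟩

theorem cyclen_mk {L : List (Fin 2 × Bool)} (hL : IsCyclicallyReduced L) :
    cyclen (mk L) = L.length := by
  refine le_antisymm (Nat.sInf_le ⟨1, ?_⟩) (le_csInf ⟨_, 1, rfl⟩ ?_)
  · rw [one_mul, inv_one, mul_one]
    exact norm_mk_of_isReduced hL.isReduced
  · rintro _ ⟨g, rfl⟩
    exact length_le_norm_of_isConj hL (.symm <| isConj_iff.2 ⟨g, rfl⟩)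

end CyclicWords

section Syllables

open FreeGroup (mk of IsCyclicallyReduced mul_mk pow_mk)

variable {α : Type*} (g h : α)

/-- The word `h^{±m}`, with the sign of `e`: exponents of runs are measured relative to the sign
of the letter they follow. -/
def run (e : Bool) (m : ℤ) : List (α × Bool) :=
  List.replicate m.natAbs (h, e == decide (0 < m))

/-- The word `∏ gᵉ hᵉᵐ` spelled by a list of syllables `(e, m)`, where `true` and `false` stand for
the signs `e = 1` and `e = -1`. -/
def syllableWord : List (Bool × ℤ) → List (α × Bool)
  | [] => []
  | (e, m) :: l => (g, e) :: (run h e m ++ syllableWord l)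

/-- The sign of the first syllable, or `z` if there is none. A list of syllables is read cyclically
by taking for `z` the sign of its own first syllable. -/
def nextSign (z : Bool) : List (Bool × ℤ) → Bool
  | [] => z
  | (e, _) :: _ => e

/-- Adjacent syllables do not cancel, the last one being followed by a letter of sign `z`. -/
def IsReducedSyllables (z : Bool) : List (Bool × ℤ) → Prop
  | [] => True
  | (e, m) :: l => (m = 0 → e = nextSign z l) ∧ IsReducedSyllables z l

/-- The effect of `g ↦ g hⁿ`, `h ↦ h` on syllables. The exponent changes only between letters
of equal sign: `g hᵐ g⁻¹` is sent to `g hⁿ hᵐ h⁻ⁿ g⁻¹`. -/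
def twist (n : ℤ) (z : Bool) : List (Bool × ℤ) → List (Bool × ℤ)
  | [] => []
  | (e, m) :: l => (e, if e = nextSign z l then m + n else m) :: twist n z l

variable {g h} {z : Bool} {l : List (Bool × ℤ)}

theorem syllableWord_cons_eq_append (f : Bool) (m : ℤ) :
    syllableWord g h ((f, m) :: l) = ((g, f) :: run h f m) ++ syllableWord g h l :=
  rfl

theorem nextSign_twist (n : ℤ) (z' : Bool) : nextSign z' (twist n z l) = nextSign z' l := by
  cases l <;> rfl

theorem IsReducedSyllables.twist (n : ℤ) (hl : IsReducedSyllables z l) :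
    IsReducedSyllables z (twist n z l) := by
  induction l with
  | nil => trivial
  | cons s l ih =>
    refine ⟨fun hm => ?_, ih hl.2⟩
    rw [nextSign_twist]
    split_ifs at hm with heq
    exacts [heq, hl.1 hm]

theorem exists_syllableWord_append_singleton (g h : α) (z : Bool) (l : List (Bool × ℤ)) :
    ∃ t, syllableWord g h l ++ [(g, z)] = (g, nextSign z l) :: t := by
  cases l with
  | nil => exact ⟨[], rfl⟩
  | cons s l => exact ⟨_, rfl⟩

theorem isReduced_replicate_append_cons_iff {x y : α × Bool} (hxy : y.1 ≠ x.1) (k : ℕ)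
    (t : List (α × Bool)) :
    FreeGroup.IsReduced (List.replicate k y ++ x :: t) ↔ FreeGroup.IsReduced (x :: t) := by
  induction k with
  | zero => rfl
  | succ k ih =>
    rw [← ih]
    cases k <;> simp [List.replicate_succ, FreeGroup.isReduced_cons_cons, hxy]

theorem isReduced_cons_run_append_iff (hgh : h ≠ g) (e e' : Bool) (m : ℤ) (t : List (α × Bool)) :
    FreeGroup.IsReduced ((g, e) :: (run h e m ++ (g, e') :: t)) ↔
      (m = 0 → e = e') ∧ FreeGroup.IsReduced ((g, e') :: t) := by
  rcases eq_or_ne m 0 with rfl | hm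
  · simp [run, FreeGroup.isReduced_cons_cons]
  · obtain ⟨k, hk⟩ := Nat.exists_eq_add_one_of_ne_zero (Int.natAbs_ne_zero.2 hm)
    rw [run, hk, List.replicate_succ, List.cons_append, FreeGroup.isReduced_cons_cons,
      ← List.cons_append, ← List.replicate_succ, isReduced_replicate_append_cons_iff (by exact hgh)]
    simp [hm, hgh.symm]

theorem isReduced_syllableWord_append_singleton_iff (hgh : h ≠ g) :
    FreeGroup.IsReduced (syllableWord g h l ++ [(g, z)]) ↔ IsReducedSyllables z l := by
  induction l with
  | nil => simp [syllableWord, IsReducedSyllables]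
  | cons s l ih =>
    obtain ⟨t, ht⟩ := exists_syllableWord_append_singleton g h z l
    rw [ht] at ih
    simp only [syllableWord, List.cons_append, List.append_assoc, IsReducedSyllables, ht]
    rw [isReduced_cons_run_append_iff hgh, ih]

theorem isCyclicallyReduced_syllableWord_iff (hgh : h ≠ g) (e : Bool) (m : ℤ) :
    IsCyclicallyReduced (syllableWord g h ((e, m) :: l)) ↔
      IsReducedSyllables e ((e, m) :: l) := by
  rw [← isReduced_syllableWord_append_singleton_iff hgh]
  exact isCyclicallyReduced_cons_iff

theorem isCyclicallyReduced_syllableWord_twist (hgh : h ≠ g) {e : Bool} {m : ℤ} (n : ℤ)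
    (hl : IsCyclicallyReduced (syllableWord g h ((e, m) :: l))) :
    IsCyclicallyReduced (syllableWord g h (twist n e ((e, m) :: l))) :=
  (isCyclicallyReduced_syllableWord_iff hgh e _).2
    (((isCyclicallyReduced_syllableWord_iff hgh e m).1 hl).twist n)

theorem exists_run_eq_replicate (h : α) (e b : Bool) (k : ℕ) :
    ∃ m, run h e m = List.replicate k (h, b) := by
  rcases Nat.eq_zero_or_pos k with rfl | hk
  · exact ⟨0, rfl⟩
  · rcases eq_or_ne e b with rfl | hne
    · exact ⟨k, by simp [run, hk]⟩
    · refine ⟨-k, ?_⟩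
      cases e <;> cases b <;> simp_all [run]

theorem exists_eq_replicate_append_syllableWord {L : List (α × Bool)}
    (hL : FreeGroup.IsReduced L) (hLgh : ∀ x ∈ L, x.1 = g ∨ x.1 = h) :
    ∃ k b l, L = List.replicate k (h, b) ++ syllableWord g h l := by
  induction L with
  | nil => exact ⟨0, true, [], rfl⟩
  | cons x L ih =>
    obtain ⟨k, b, l, rfl⟩ := ih hL.tail fun y hy => hLgh y (.tail _ hy)
    obtain ⟨i, c⟩ := x
    obtain rfl | rfl : i = g ∨ i = h := hLgh _ List.mem_cons_self
    · obtain ⟨m, hm⟩ := exists_run_eq_replicate h c b k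
      exact ⟨0, true, (c, m) :: l, by simp [syllableWord, hm]⟩
    · cases k with
      | zero => exact ⟨1, c, l, rfl⟩
      | succ k =>
        have hcb : c = b := (FreeGroup.isReduced_cons_cons.1 hL).1 rfl
        exact ⟨k + 2, b, l, by simp [hcb, List.replicate_succ]⟩

theorem exists_append_eq_syllableWord {L : List (α × Bool)}
    (hL : IsCyclicallyReduced L) (hLgh : ∀ x ∈ L, x.1 = g ∨ x.1 = h) {e : Bool}
    (he : (g, e) ∈ L) :
    ∃ A B m l, L = A ++ B ∧ B ++ A = syllableWord g h ((e, m) :: l) := by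
  obtain ⟨A, B, rfl⟩ := List.append_of_mem he
  have hBA : IsCyclicallyReduced ((g, e) :: (B ++ A)) := isCyclicallyReduced_append_comm hL
  have hBAgh : ∀ x ∈ B ++ A, x.1 = g ∨ x.1 = h := by
    intro x hx
    apply hLgh
    simp only [List.mem_append, List.mem_cons] at hx ⊢
    tauto
  obtain ⟨k, b, l, hl⟩ := exists_eq_replicate_append_syllableWord hBA.isReduced.tail hBAgh
  rw [List.tail_cons] at hl
  obtain ⟨m, hm⟩ := exists_run_eq_replicate h e b k
  exact ⟨A, (g, e) :: B, m, l, rfl, by rw [syllableWord, List.cons_append, hl, hm]⟩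

theorem mk_singleton (x : α) (e : Bool) : mk [(x, e)] = of x ^ (cond e 1 (-1) : ℤ) := by
  cases e
  exacts [(zpow_neg_one (of x)).symm, (zpow_one (of x)).symm]

theorem mk_run (e : Bool) (m : ℤ) : mk (run h e m) = of h ^ cond e m (-m) := by
  have hexp : (cond (e == decide (0 < m)) 1 (-1) : ℤ) * m.natAbs = cond e m (-m) := by
    rcases lt_or_ge 0 m with hm | hm
    · cases e <;> simp [hm, abs_of_pos]
    · cases e <;> simp [hm.not_gt, abs_of_nonpos hm]
  rw [run, ← List.flatten_replicate_singleton, ← pow_mk, mk_singleton, ← zpow_natCast,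
    ← zpow_mul, hexp]

theorem mk_syllableWord_cons (e : Bool) (m : ℤ) :
    mk (syllableWord g h ((e, m) :: l)) =
      of g ^ (cond e 1 (-1) : ℤ) * of h ^ cond e m (-m) * mk (syllableWord g h l) := by
  rw [syllableWord, ← List.singleton_append, ← mul_mk, ← mul_mk, mk_run, mul_assoc, mk_singleton]

theorem map_mk_syllableWord {Φ : Type*} [FunLike Φ (FreeGroup α) (FreeGroup α)]
    [MonoidHomClass Φ (FreeGroup α) (FreeGroup α)] {φ : Φ} {n : ℤ}
    (hg : φ (of g) = of g * of h ^ n) (hh : φ (of h) = of h) :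
    φ (mk (syllableWord g h l)) =
      of h ^ cond (nextSign z l) 0 (-n) * mk (syllableWord g h (twist n z l)) *
        (of h ^ cond z 0 (-n))⁻¹ := by
  induction l with
  | nil => simp [syllableWord, twist, nextSign, ← FreeGroup.one_eq_mk]
  | cons s l ih =>
    obtain ⟨e, m⟩ := s
    rw [twist, mk_syllableWord_cons, mk_syllableWord_cons, map_mul, map_mul, map_zpow, map_zpow,
      hg, hh, ih]
    change _ = of h ^ cond e 0 (-n) * _ * _
    cases e <;> cases nextSign z l <;>
      simp only [cond_true, cond_false, reduceIte, reduceCtorEq] <;> group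

theorem isConj_map_mk_syllableWord {Φ : Type*} [FunLike Φ (FreeGroup α) (FreeGroup α)]
    [MonoidHomClass Φ (FreeGroup α) (FreeGroup α)] {φ : Φ} {n : ℤ}
    (hg : φ (of g) = of g * of h ^ n) (hh : φ (of h) = of h) (e : Bool) (m : ℤ) :
    IsConj (φ (mk (syllableWord g h ((e, m) :: l))))
      (mk (syllableWord g h (twist n e ((e, m) :: l)))) :=
  .symm <| isConj_iff.2 ⟨_, (map_mk_syllableWord hg hh).symm⟩

end Syllables

section Deficit

/-- The cost `max (0, -m)` of a syllable `(e, m)` followed by a letter of sign `z`, charged only if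
`z = e`. It is the number of twists needed before the twist lengthens the syllable. -/
def closingCost (s : Bool × ℤ) (z : Bool) : ℕ :=
  if s.1 = z then (-s.2).toNat else 0

/-- The total closing cost of a list of syllables, the last one being followed by a letter of
sign `z`. -/
def deficit (z : Bool) : List (Bool × ℤ) → ℕ
  | [] => 0
  | s :: l => closingCost s (nextSign z l) + deficit z l

variable {α : Type*} {z : Bool} {l : List (Bool × ℤ)}

theorem deficit_twist_le (n : ℕ) : deficit z (twist n z l) ≤ deficit z l - n := by
  induction l with
  | nil => exact Nat.zero_le _
  | cons s l ih =>
    have hs : closingCost (s.1, if s.1 = nextSign z l then s.2 + n else s.2) (nextSign z l) =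
        closingCost s (nextSign z l) - n := by
      unfold closingCost
      split_ifs <;> omega
    rw [twist, deficit, deficit, nextSign_twist, hs]
    omega

theorem exists_length_syllableWord_twist (g h : α) (hl : deficit z l = 0) :
    ∃ C, ∀ n : ℕ, (syllableWord g h (twist n z l)).length =
      (syllableWord g h l).length + n * C := by
  induction l with
  | nil => exact ⟨0, fun n => rfl⟩
  | cons s l ih =>
    obtain ⟨hs, hl⟩ := Nat.add_eq_zero_iff.1 hl
    obtain ⟨C, hC⟩ := ih hl
    refine ⟨(if s.1 = nextSign z l then 1 else 0) + C, fun n => ?_⟩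
    simp only [twist, syllableWord, run, List.length_cons, List.length_append,
      List.length_replicate, hC, mul_add]
    unfold closingCost at hs
    split_ifs at hs ⊢ <;> omega

end Deficit

section Scan

variable {α : Type*} [DecidableEq α] (g : α)

/-- One step of reading a word letter by letter while keeping track of the open syllable `(e, m)`:
the sign `e` of the last letter `g` and the exponent `m`, relative to `e`, read since.
Letters other than `g` are not distinguished. -/
def scanStep (s : Bool × ℤ) (x : α × Bool) : Bool × ℤ :=
  if x.1 = g then (x.2, 0) else (s.1, if x.2 = s.1 then s.2 + 1 else s.2 - 1)

/-- The syllable left open after reading a word, starting with the open syllable `s`. -/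
def scan (s : Bool × ℤ) (L : List (α × Bool)) : Bool × ℤ :=
  L.foldl (scanStep g) s

/-- The total closing cost of the syllables completed while reading a word, starting with the open
syllable `s`. -/
def scanCost (s : Bool × ℤ) : List (α × Bool) → ℕ
  | [] => 0
  | x :: L => (if x.1 = g then closingCost s x.2 else 0) + scanCost (scanStep g s x) L

variable {g} {s : Bool × ℤ} {A B L : List (α × Bool)}

theorem scan_append : scan g s (A ++ B) = scan g (scan g s A) B :=
  List.foldl_append

theorem scanStep_of_ne {h : α} (hgh : h ≠ g) (f : Bool) :
    scanStep g s (h, f) = (s.1, if f = s.1 then s.2 + 1 else s.2 - 1) :=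
  if_neg hgh

theorem scanCost_cons_of_ne {h : α} (hgh : h ≠ g) (f : Bool) (L : List (α × Bool)) :
    scanCost g s ((h, f) :: L) = scanCost g (scanStep g s (h, f)) L := by
  rw [scanCost, if_neg (by exact hgh), zero_add]

theorem scanCost_append : scanCost g s (A ++ B) = scanCost g s A + scanCost g (scan g s A) B := by
  induction A generalizing s with
  | nil => exact (Nat.zero_add _).symm
  | cons x A ih => rw [List.cons_append, scanCost, scanCost, ih, add_assoc]; rfl

theorem scan_congr {b : Bool} (hL : (g, b) ∈ L) (s t : Bool × ℤ) : scan g s L = scan g t L := by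
  obtain ⟨A, B, rfl⟩ := List.append_of_mem hL
  simp [scan, scanStep]

theorem scanCost_eq_zero (hL : ∀ x ∈ L, x.1 ≠ g) : scanCost g s L = 0 := by
  induction L generalizing s with
  | nil => rfl
  | cons x L ih =>
    rw [scanCost, if_neg (hL x List.mem_cons_self), ih fun y hy => hL y (.tail _ hy)]

theorem scanCost_add_natAbs_le :
    scanCost g s L + (scan g s L).2.natAbs ≤ L.length + s.2.natAbs := by
  induction L generalizing s with
  | nil => simp [scanCost, scan]
  | cons x L ih =>
    have hx : (if x.1 = g then closingCost s x.2 else 0) + (scanStep g s x).2.natAbs ≤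
        1 + s.2.natAbs := by
      unfold scanStep closingCost
      split_ifs <;> simp only <;> omega
    have := @ih (scanStep g s x)
    rw [scanCost, List.length_cons]
    change _ + (scan g (scanStep g s x) L).2.natAbs ≤ _
    omega

variable (g) in
/-- Read cyclically, `L` has deficit at most `t` with respect to `g`. A fixed point `s` of reading
`L` is the syllable that is open at the start of the cyclic word; there is none if `L` is a nonzero
power of another letter. -/
def DeficitLE (L : List (α × Bool)) (t : ℕ) : Prop :=
  ∀ s, scan g s L = s → scanCost g s L ≤ t

theorem deficitLE_length (L : List (α × Bool)) : DeficitLE g L L.length := fun s hs => by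
  have := scanCost_add_natAbs_le (g := g) (s := s) (L := L)
  rw [hs] at this
  omega

theorem DeficitLE.append_comm {t : ℕ} (ht : DeficitLE g (A ++ B) t) : DeficitLE g (B ++ A) t := by
  intro s hs
  rw [scan_append] at hs
  have hAB := ht (scan g s B) (by rw [scan_append, hs])
  rw [scanCost_append, hs] at hAB
  rwa [scanCost_append, add_comm]

theorem DeficitLE.scanCost_scan_le {t : ℕ} (ht : DeficitLE g L t) (s : Bool × ℤ) :
    scanCost g (scan g s L) L ≤ t := by
  by_cases hL : ∃ b, (g, b) ∈ L
  · obtain ⟨b, hb⟩ := hL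
    exact ht _ (scan_congr hb _ _)
  · rw [scanCost_eq_zero]
    · exact Nat.zero_le t
    · rintro ⟨_, b⟩ hb rfl
      exact hL ⟨b, hb⟩

variable {h : α} {z : Bool} {l : List (Bool × ℤ)}

theorem scan_replicate (hgh : h ≠ g) (e b : Bool) (m : ℤ) (k : ℕ) :
    scan g (e, m) (List.replicate k (h, b)) = (e, if b = e then m + k else m - k) := by
  induction k generalizing m with
  | zero => simp [scan]
  | succ k ih =>
    change scan g (scanStep g (e, m) (h, b)) (List.replicate k (h, b)) = _
    rw [scanStep_of_ne hgh, ih]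
    grind

theorem scan_run (hgh : h ≠ g) (e : Bool) (m : ℤ) : scan g (e, 0) (run h e m) = (e, m) := by
  rw [run, scan_replicate hgh]
  cases e <;> grind

theorem scanCost_syllableWord (hgh : h ≠ g) :
    scanCost g s (syllableWord g h l) + closingCost (scan g s (syllableWord g h l)) z =
      closingCost s (nextSign z l) + deficit z l := by
  induction l generalizing s with
  | nil => simp [syllableWord, scanCost, scan, deficit, nextSign]
  | cons p l ih =>
    obtain ⟨e, m⟩ := p
    have hrun : scanCost g (e, 0) (run h e m) = 0 :=
      scanCost_eq_zero fun x hx => by rw [List.eq_of_mem_replicate hx]; exact hgh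
    have hscan :
        scan g s (syllableWord g h ((e, m) :: l)) = scan g (e, m) (syllableWord g h l) := by
      rw [syllableWord, ← List.singleton_append, scan_append, scan_append, ← scan_run hgh e m]
      simp [scan, scanStep]
    have hcost : scanCost g s (syllableWord g h ((e, m) :: l)) =
        closingCost s e + scanCost g (e, m) (syllableWord g h l) := by
      rw [syllableWord, scanCost, scanCost_append, if_pos rfl, scanStep, if_pos rfl, hrun,
        scan_run hgh, zero_add]
    rw [hscan, hcost, add_assoc, ih]
    rfl

theorem deficitLE_syllableWord_iff (hgh : h ≠ g) (e : Bool) (m : ℤ) {t : ℕ} :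
    DeficitLE g (syllableWord g h ((e, m) :: l)) t ↔ deficit e ((e, m) :: l) ≤ t := by
  have hcost {s} (hs : scan g s (syllableWord g h ((e, m) :: l)) = s) :
      scanCost g s (syllableWord g h ((e, m) :: l)) = deficit e ((e, m) :: l) := by
    have := scanCost_syllableWord (s := s) (z := e) (l := (e, m) :: l) hgh
    rw [hs, add_comm] at this
    exact Nat.add_left_cancel this
  refine ⟨fun ht => ?_, fun ht s hs => (hcost hs).trans_le ht⟩
  exact hcost (scan_congr List.mem_cons_self _ _) ▸ ht.scanCost_scan_le (e, 0)

end Scan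

section CrossTwist

variable {α : Type*} [DecidableEq α] {g h : α}

theorem scan_run_self (s : Bool × ℤ) (f : Bool) (m : ℤ) :
    scan g s (run g f m) = if m = 0 then s else (f == decide (0 < m), 0) := by
  split_ifs with hm
  · simp [hm, run, scan]
  · obtain ⟨k, hk⟩ := Nat.exists_eq_add_one_of_ne_zero (Int.natAbs_ne_zero.2 hm)
    rw [run, hk, List.replicate_succ', scan_append]
    simp [scan, scanStep]

theorem scanCost_run_self (s : Bool × ℤ) (f : Bool) (m : ℤ) :
    scanCost g s (run g f m) = if m = 0 then 0 else closingCost s (f == decide (0 < m)) := by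
  have hclosed (b : Bool) (k : ℕ) : scanCost g (b, 0) (List.replicate k (g, b)) = 0 := by
    induction k with
    | zero => rfl
    | succ k ih => simpa [List.replicate_succ, scanCost, scanStep, closingCost] using ih
  split_ifs with hm
  · simp [hm, run, scanCost]
  · obtain ⟨k, hk⟩ := Nat.exists_eq_add_one_of_ne_zero (Int.natAbs_ne_zero.2 hm)
    simp [run, hk, List.replicate_succ, scanCost, scanStep, hclosed]

/-- The relation between the open syllables `s'` and `s` reached by reading a twisted word and the
original word: if the next letter `hᶠ` contributes to the deficit of the twisted word, then the
preceding letter of the original word is the inverse of `gᶠ`. -/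
def TwistCompat (f : Bool) (s' s : Bool × ℤ) : Prop :=
  s'.2 ≤ 0 → s'.1 = !f → s = (s'.1, 0)

theorem twistCompat_scan_block (hgh : h ≠ g) {n : ℕ} (hn : 0 < n) {f f₂ : Bool} {m : ℤ}
    (hm : m = 0 → f = f₂) (s' s : Bool × ℤ) :
    TwistCompat f₂ (scan g s' ((h, f) :: run g f (if f = f₂ then m + n else m)))
      (scan g s ((h, f) :: run g f m)) := by
  change TwistCompat f₂ (scan g (scanStep g s' (h, f)) _) (scan g (scanStep g s (h, f)) _)
  rw [scan_run_self, scan_run_self, scanStep_of_ne hgh, scanStep_of_ne hgh]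
  unfold TwistCompat
  have hneg : (if f = f₂ then m + n else m) ≤ 0 → m < 0 := by grind
  rcases lt_trichotomy (if f = f₂ then m + n else m) 0 with hm' | hm' | hm' <;> grind

theorem scanCost_block_le (hgh : h ≠ g) {n : ℕ} (hn : 0 < n) {f f₂ : Bool} {m : ℤ}
    (hm : m = 0 → f = f₂) {s' s : Bool × ℤ} (hs : TwistCompat f s' s) :
    scanCost g s' ((h, f) :: run g f (if f = f₂ then m + n else m)) +
        (-(scan g s' ((h, f) :: run g f (if f = f₂ then m + n else m))).2).toNat ≤
      scanCost g s ((h, f) :: run g f m) + (-s'.2).toNat := by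
  change _ + (-(scan g (scanStep g s' (h, f)) _).2).toNat ≤ _
  rw [scanCost_cons_of_ne hgh, scanCost_cons_of_ne hgh, scanCost_run_self, scanCost_run_self,
    scan_run_self, scanStep_of_ne hgh, scanStep_of_ne hgh]
  have hneg : (if f = f₂ then m + n else m) ≤ 0 → m < 0 := by grind
  generalize (if f = f₂ then m + n else m) = m' at *
  -- If `hᶠ` raises the pending cost, then the original word reads `g⁻ᶠ hᶠ g⁻ᶠ` here, of cost `1`.
  have hletter (hm0 : m < 0) : (-(if f = s'.1 then s'.2 + 1 else s'.2 - 1)).toNat ≤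
      (if m = 0 then 0 else closingCost (s.1, if f = s.1 then s.2 + 1 else s.2 - 1)
        (f == decide (0 < m))) + (-s'.2).toNat := by
    unfold TwistCompat at hs
    grind [closingCost]
  rcases lt_trichotomy m' 0 with hm' | rfl | hm'
  · have := hletter (hneg hm'.le)
    grind [closingCost]
  · have := hletter (hneg le_rfl)
    grind
  · grind [closingCost]

variable {z : Bool} {l : List (Bool × ℤ)}

theorem twistCompat_scan_syllableWord (hgh : h ≠ g) {n : ℕ} (hn : 0 < n)
    (hl : IsReducedSyllables z l) (hne : l ≠ []) (s' s : Bool × ℤ) :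
    TwistCompat z (scan g s' (syllableWord h g (twist n z l)))
      (scan g s (syllableWord h g l)) := by
  induction l generalizing s' s with
  | nil => exact absurd rfl hne
  | cons p l ih =>
    rw [twist, syllableWord_cons_eq_append, syllableWord_cons_eq_append, scan_append, scan_append]
    rcases eq_or_ne l [] with rfl | hl'
    · exact twistCompat_scan_block hgh hn hl.1 s' s
    · exact ih hl.2 hl' _ _

theorem scanCost_syllableWord_twist_le (hgh : h ≠ g) {n : ℕ} (hn : 0 < n)
    (hl : IsReducedSyllables z l) {s' s : Bool × ℤ} (hs : TwistCompat (nextSign z l) s' s) :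
    scanCost g s' (syllableWord h g (twist n z l)) +
        (-(scan g s' (syllableWord h g (twist n z l))).2).toNat ≤
      scanCost g s (syllableWord h g l) + (-s'.2).toNat := by
  induction l generalizing s' s with
  | nil => exact le_rfl
  | cons p l ih =>
    rw [twist, syllableWord_cons_eq_append, syllableWord_cons_eq_append, scan_append,
      scanCost_append, scanCost_append]
    have hblock := scanCost_block_le hgh hn hl.1 hs
    have hrest := ih hl.2 (twistCompat_scan_block hgh hn hl.1 s' s)
    omega

theorem DeficitLE.syllableWord_twist (hgh : h ≠ g) {n : ℕ} (hn : 0 < n) {f : Bool} {m : ℤ}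
    (hl : IsReducedSyllables f ((f, m) :: l)) {t : ℕ}
    (ht : DeficitLE g (syllableWord h g ((f, m) :: l)) t) :
    DeficitLE g (syllableWord h g (twist n f ((f, m) :: l))) t := by
  intro s hs
  have hcompat := twistCompat_scan_syllableWord hgh hn hl (List.cons_ne_nil _ _) s s
  rw [hs] at hcompat
  have hle := scanCost_syllableWord_twist_le hgh hn hl hcompat
  rw [hs] at hle
  exact (Nat.le_of_add_le_add_right hle).trans (ht.scanCost_scan_le s)

end CrossTwist

section Chains

open FreeGroup (mk of IsCyclicallyReduced)

/-- Some cyclically reduced conjugate of `w` has deficit at most `t` with respect to the letter `a`,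
which is the index `0`. -/
def HasDeficitLE (w : F) (t : ℕ) : Prop :=
  ∃ L, IsCyclicallyReduced L ∧ IsConj w (mk L) ∧ DeficitLE 0 L t

variable {w : F} {t : ℕ}

theorem hasDeficitLE_cyclen (w : F) : HasDeficitLE w (cyclen w) := by
  obtain ⟨L, hL, hw⟩ := exists_isCyclicallyReduced_isConj_mk w
  exact ⟨L, hL, hw, (cyclen_eq_of_isConj hw).trans (cyclen_mk hL) ▸ deficitLE_length L⟩

theorem pow_apply_eq_self {G : Type*} [Group G] {φ : MulAut G} {y : G} (hy : φ y = y) (n : ℕ) :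
    (φ ^ n) y = y := by
  induction n with
  | zero => rfl
  | succ n ih => rw [pow_succ, MulAut.mul_apply, hy, ih]

theorem pow_apply_eq_mul_zpow {G : Type*} [Group G] {φ : MulAut G} {x y : G} (hx : φ x = x * y)
    (hy : φ y = y) (n : ℕ) : (φ ^ n) x = x * y ^ (n : ℤ) := by
  rw [zpow_natCast]
  induction n with
  | zero => simp
  | succ n ih =>
    rw [pow_succ, MulAut.mul_apply, hx, map_mul, ih, pow_apply_eq_self hy, pow_succ, mul_assoc]

theorem σ_of_zero : σ (of 0) = of 0 * of 1 := by simp [σ, mkAut, ga, gb]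

theorem σ_of_one : σ (of 1) = of 1 := by simp [σ, mkAut, gb]

theorem τ_of_zero : τ (of 0) = of 0 := by simp [τ, mkAut, ga]

theorem τ_of_one : τ (of 1) = of 1 * of 0 := by simp [τ, mkAut, ga, gb]

theorem HasDeficitLE.exists_syllableWord {g h : Fin 2} (hgh : h ≠ g) (hw : HasDeficitLE w t) :
    ∃ L, IsCyclicallyReduced L ∧ IsConj w (mk L) ∧ DeficitLE 0 L t ∧
      ((∀ x ∈ L, x.1 = h) ∨ ∃ e m l, L = syllableWord g h ((e, m) :: l)) := by
  obtain ⟨L, hL, hwL, ht⟩ := hw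
  have hLgh : ∀ x ∈ L, x.1 = g ∨ x.1 = h := by omega
  by_cases hg : ∃ e, (g, e) ∈ L
  · obtain ⟨e, he⟩ := hg
    obtain ⟨A, B, m, l, rfl, hword⟩ := exists_append_eq_syllableWord hL hLgh he
    exact ⟨B ++ A, isCyclicallyReduced_append_comm hL, hwL.trans (isConj_mk_append_comm A B),
      ht.append_comm, .inr ⟨e, m, l, hword⟩⟩
  · exact ⟨L, hL, hwL, ht,
      .inl fun x hx => (hLgh x hx).resolve_left fun hxg => hg ⟨x.2, hxg ▸ hx⟩⟩

theorem isConj_σ_pow_syllableWord (n : ℕ) (e : Bool) (m : ℤ) (l : List (Bool × ℤ)) :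
    IsConj ((σ ^ n) (mk (syllableWord 0 1 ((e, m) :: l))))
      (mk (syllableWord 0 1 (twist n e ((e, m) :: l)))) :=
  isConj_map_mk_syllableWord (pow_apply_eq_mul_zpow σ_of_zero σ_of_one n)
    (pow_apply_eq_self σ_of_one n) e m

theorem isConj_τ_pow_syllableWord (n : ℕ) (f : Bool) (m : ℤ) (l : List (Bool × ℤ)) :
    IsConj ((τ ^ n) (mk (syllableWord 1 0 ((f, m) :: l))))
      (mk (syllableWord 1 0 (twist n f ((f, m) :: l)))) :=
  isConj_map_mk_syllableWord (pow_apply_eq_mul_zpow τ_of_one τ_of_zero n)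
    (pow_apply_eq_self τ_of_zero n) f m

theorem HasDeficitLE.σ_pow (n : ℕ) (hw : HasDeficitLE w t) :
    HasDeficitLE ((σ ^ n) w) (t - n) := by
  obtain ⟨L, hL, hwL, ht, hb | ⟨e, m, l, rfl⟩⟩ :=
    hw.exists_syllableWord (g := 0) (h := 1) (by decide)
  all_goals have hσ := (σ ^ n).toMonoidHom.map_isConj hwL
  · have hfix : (σ ^ n) (mk L) = mk L :=
      map_mk_eq_self_of_forall _ fun x hx => by rw [hb x hx, pow_apply_eq_self σ_of_one]
    have hcost (s) : scanCost 0 s L = 0 :=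
      scanCost_eq_zero fun x hx => by rw [hb x hx]; decide
    exact ⟨L, hL, hfix ▸ hσ, fun s _ => (hcost s).trans_le (Nat.zero_le _)⟩
  · refine ⟨_, isCyclicallyReduced_syllableWord_twist (by decide) n hL,
      hσ.trans (isConj_σ_pow_syllableWord n e m l), ?_⟩
    have hdef := (deficitLE_syllableWord_iff (by decide) e m).1 ht
    exact (deficitLE_syllableWord_iff (by decide) e _).2
      ((deficit_twist_le n).trans (Nat.sub_le_sub_right hdef n))

theorem HasDeficitLE.τ_pow (n : ℕ) (hw : HasDeficitLE w t) : HasDeficitLE ((τ ^ n) w) t := by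
  rcases Nat.eq_zero_or_pos n with rfl | hn
  · exact hw
  obtain ⟨L, hL, hwL, ht, ha | ⟨f, m, l, rfl⟩⟩ :=
    hw.exists_syllableWord (g := 1) (h := 0) (by decide)
  all_goals have hτ := (τ ^ n).toMonoidHom.map_isConj hwL
  · have hfix : (τ ^ n) (mk L) = mk L :=
      map_mk_eq_self_of_forall _ fun x hx => by rw [ha x hx, pow_apply_eq_self τ_of_zero]
    exact ⟨L, hL, hfix ▸ hτ, ht⟩
  · have hl := (isCyclicallyReduced_syllableWord_iff (by decide) f m).1 hL
    exact ⟨_, isCyclicallyReduced_syllableWord_twist (by decide) n hL,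
      hτ.trans (isConj_τ_pow_syllableWord n f m l),
      ht.syllableWord_twist (by decide) hn hl⟩

theorem HasDeficitLE.chainC1 (c : List (ℕ × ℕ)) (hw : HasDeficitLE w t) :
    HasDeficitLE (chainC1 c w) (t - sigmaCount c) := by
  induction c with
  | nil => exact hw
  | cons p c ih =>
    have hp := (ih.σ_pow p.1).τ_pow p.2
    rw [Nat.sub_sub, add_comm (sigmaCount c)] at hp
    exact hp

theorem HasDeficitLE.exists_cyclen_σ_pow (hw : HasDeficitLE w 0) :
    ∃ C, ∀ n, cyclen ((σ ^ n) w) = cyclen w + n * C := by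
  obtain ⟨L, hL, hwL, ht, hb | ⟨e, m, l, rfl⟩⟩ :=
    hw.exists_syllableWord (g := 0) (h := 1) (by decide)
  all_goals have hσ (n) := (σ ^ n).toMonoidHom.map_isConj hwL
  · have hfix (n) : (σ ^ n) (mk L) = mk L :=
      map_mk_eq_self_of_forall _ fun x hx => by rw [hb x hx, pow_apply_eq_self σ_of_one]
    exact ⟨0, fun n => cyclen_eq_of_isConj ((hfix n ▸ hσ n).trans hwL.symm)⟩
  · have hdef := (deficitLE_syllableWord_iff (by decide) e m).1 ht
    obtain ⟨C, hC⟩ := exists_length_syllableWord_twist (0 : Fin 2) 1 (Nat.le_zero.1 hdef)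
    refine ⟨C, fun n => ?_⟩
    have hconj := (hσ n).trans (isConj_σ_pow_syllableWord n e m l)
    calc cyclen ((σ ^ n) w) = (syllableWord 0 1 (twist n e ((e, m) :: l))).length :=
          (cyclen_eq_of_isConj hconj).trans
            (cyclen_mk (isCyclicallyReduced_syllableWord_twist (by decide) n hL))
      _ = cyclen w + n * C := by rw [hC, cyclen_eq_of_isConj hwL, cyclen_mk hL]

theorem cyclen_σ_eq_iff {c : List (ℕ × ℕ)} (hw : cyclen w ≤ sigmaCount c) (n : ℕ) :
    cyclen (σ (chainC1 c w)) = cyclen (chainC1 c w) ↔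
      cyclen ((σ ^ (n + 1)) (chainC1 c w)) = cyclen ((σ ^ n) (chainC1 c w)) := by
  have h0 := (hasDeficitLE_cyclen w).chainC1 c
  rw [Nat.sub_eq_zero_of_le hw] at h0
  obtain ⟨C, hC⟩ := h0.exists_cyclen_σ_pow
  have h1 := hC 1
  rw [pow_one] at h1
  rw [h1, hC, hC, add_mul]
  omega

theorem stmt9_general (u v : F) (c : List (ℕ × ℕ)) (n : ℕ)
    (hu : cyclen u ≤ sigmaCount c) (hv : cyclen v ≤ sigmaCount c)
    (H : cyclen ((σ ^ (n + 1)) (chainC1 c u)) = cyclen ((σ ^ n) (chainC1 c u)) ↔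
      cyclen ((σ ^ (n + 1)) (chainC1 c v)) = cyclen ((σ ^ n) (chainC1 c v))) :
    cyclen (σ (chainC1 c u)) = cyclen (chainC1 c u) ↔
      cyclen (σ (chainC1 c v)) = cyclen (chainC1 c v) := by
  rw [cyclen_σ_eq_iff hu n, cyclen_σ_eq_iff hv n, H]

end Chains

/-- Corollary 4.5 (i):  here `k = ‖u‖ + 1`. -/
theorem stmt9 (u v : F) (huv : cyclen v ≤ cyclen u)
    (c : List (ℕ × ℕ)) (hne : c ≠ [])
    (H : ∀ c' : List (ℕ × ℕ), c' ≠ [] → chainLen c' ≤ chainLen c →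
      ((cyclen ((σ ^ (cyclen u + 2)) (chainC1 c' u)) = cyclen ((σ ^ (cyclen u + 1)) (chainC1 c' u)) ↔
        cyclen ((σ ^ (cyclen u + 2)) (chainC1 c' v)) = cyclen ((σ ^ (cyclen u + 1)) (chainC1 c' v))) ∧
       (cyclen ((τ ^ (cyclen u + 2)) (chainC1 c' u)) = cyclen ((τ ^ (cyclen u + 1)) (chainC1 c' u)) ↔
        cyclen ((τ ^ (cyclen u + 2)) (chainC1 c' v)) = cyclen ((τ ^ (cyclen u + 1)) (chainC1 c' v)))))
    (hσ : cyclen u + 1 ≤ sigmaCount c) :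
    cyclen (σ (chainC1 c u)) = cyclen (chainC1 c u) ↔
      cyclen (σ (chainC1 c v)) = cyclen (chainC1 c v) := by
  exact stmt9_general u v c (cyclen u + 1) (by omega) (by omega) (H c hne le_rfl).1
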